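/- Let D be a pseudolinear good drawing of K_n in ℝ². Then for every 3-cycle T of K_n, the bounded closed disc determined by the simple closed curve D[T] is convex; consequently the drawing of K_n in the sphere S² obtained from D via the inverse of a stereographic projection is face-convex, with outer face the face containing the projection point. -/

import Mathlib

open Set Topology

noncomputable section

abbrev Plane : Type := EuclideanSpace ℝ (Fin 2)

abbrev SpherePt : Type := ↥(Metric.sphere (0 : EuclideanSpace ℝ (Fin 3)) 1)

/-- `γ` crosses the curve `σ` at `p`: `p` lies on both sets, and in every neighbourhood of `p`
there is a smaller neighbourhood `V` such that `V \ σ` splits into two connected "sides",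
both of which meet `γ`. -/
def CrossesAt {X : Type*} [TopologicalSpace X] (σ γ : Set X) (p : X) : Prop :=
  p ∈ σ ∧ p ∈ γ ∧ ∀ U ∈ nhds p, ∃ V ∈ nhds p, V ⊆ U ∧
    ∃ C₁ C₂ : Set X, V \ σ = C₁ ∪ C₂ ∧ Disjoint C₁ C₂ ∧
      IsPreconnected C₁ ∧ IsPreconnected C₂ ∧ (γ ∩ C₁).Nonempty ∧ (γ ∩ C₂).Nonempty

/-- `Δ` is one of the closed regions ("closed discs") bounded by the curve `C`:
it is the union of `C` with a connected component of the complement of `C`. -/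
def IsClosedSide {X : Type*} [TopologicalSpace X] (C Δ : Set X) : Prop :=
  ∃ q, q ∉ C ∧ Δ = connectedComponentIn Cᶜ q ∪ C

/-- `Δ` is one of the open regions ("open discs") bounded by the curve `C`. -/
def IsOpenSide {X : Type*} [TopologicalSpace X] (C Δ : Set X) : Prop :=
  ∃ q, q ∉ C ∧ Δ = connectedComponentIn Cᶜ q

/-- `G` is a face (a connected component of the complement) of the point set `A`. -/
def IsFaceOf {X : Type*} [TopologicalSpace X] (A G : Set X) : Prop :=
  ∃ q, q ∉ A ∧ G = connectedComponentIn Aᶜ q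

/-- A good drawing of the complete graph `K_n` in the space `X`. -/
structure GoodDrawing (n : ℕ) (X : Type*) [TopologicalSpace X] where
  vtx : Fin n → X
  arc : Fin n → Fin n → Set X
  vtx_inj : Function.Injective vtx
  arc_symm : ∀ u v, arc u v = arc v u
  isArc : ∀ u v, u ≠ v → ∃ f : ℝ → X, ContinuousOn f (Set.Icc 0 1) ∧
    Set.InjOn f (Set.Icc 0 1) ∧ f 0 = vtx u ∧ f 1 = vtx v ∧ arc u v = f '' Set.Icc 0 1
  vtx_not_mem : ∀ u v w, u ≠ v → w ≠ u → w ≠ v → vtx w ∉ arc u v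
  adj_arcs : ∀ u v w, u ≠ v → u ≠ w → v ≠ w → arc u v ∩ arc u w = {vtx u}
  indep_arcs : ∀ u v x y : Fin n, u ≠ v → x ≠ y → u ≠ x → u ≠ y → v ≠ x → v ≠ y →
    (arc u v ∩ arc x y).Subsingleton ∧
      ∀ p ∈ arc u v ∩ arc x y,
        CrossesAt (arc u v) (arc x y) p ∧ CrossesAt (arc x y) (arc u v) p
  no_triple_pt : ∀ p : X, p ∉ Set.range vtx → ∀ u v x y s t : Fin n,
    u ≠ v → x ≠ y → s ≠ t →
    ({u, v} : Finset (Fin n)) ≠ {x, y} → ({u, v} : Finset (Fin n)) ≠ {s, t} →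
    ({x, y} : Finset (Fin n)) ≠ {s, t} →
    ¬(p ∈ arc u v ∧ p ∈ arc x y ∧ p ∈ arc s t)

namespace GoodDrawing

variable {n : ℕ} {X : Type*} [TopologicalSpace X]

/-- The point set of the subdrawing induced by the set `W` of vertices. -/
def image (D : GoodDrawing n X) (W : Set (Fin n)) : Set X :=
  (D.vtx '' W) ∪ ⋃ u ∈ W, ⋃ v ∈ W, ⋃ (_ : u ≠ v), D.arc u v

/-- The simple closed curve that is the drawing of the 3-cycle on `a`, `b`, `c`. -/
def tri (D : GoodDrawing n X) (a b c : Fin n) : Set X :=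
  D.arc a b ∪ D.arc b c ∪ D.arc a c

/-- `Δ` is convex: it contains the arc between any two vertex points it contains. -/
def ConvexDisc (D : GoodDrawing n X) (Δ : Set X) : Prop :=
  ∀ x y : Fin n, x ≠ y → D.vtx x ∈ Δ → D.vtx y ∈ Δ → D.arc x y ⊆ Δ

/-- `F` is a face of the drawing `D`. -/
def IsFace (D : GoodDrawing n X) (F : Set X) : Prop :=
  IsFaceOf (D.image Set.univ) F

/-- `D` is face-convex with outer face `F`. -/
def FaceConvex (D : GoodDrawing n X) (F : Set X) : Prop :=
  D.IsFace F ∧ ∀ a b c : Fin n, a ≠ b → a ≠ c → b ≠ c →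
    ∀ Δ : Set X, IsClosedSide (D.tri a b c) Δ → ¬F ⊆ Δ → D.ConvexDisc Δ

/-- `D` is a convex drawing: every 3-cycle has at least one convex closed side. -/
def IsConvex (D : GoodDrawing n X) : Prop :=
  ∀ a b c : Fin n, a ≠ b → a ≠ c → b ≠ c →
    ∃ Δ : Set X, IsClosedSide (D.tri a b c) Δ ∧ D.ConvexDisc Δ

/-- The closed curve drawn by the cycle `c 0, c 1, …, c (m-1), c 0` of `K_n`. -/
def cycCurve (D : GoodDrawing n X) {m : ℕ} [NeZero m] (c : Fin m → Fin n) : Set X :=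
  ⋃ i : Fin m, D.arc (c i) (c (i + 1))

/-- `Δ` is the convex hull `Δ_W` of the vertex set `W` (relative to the outer face `F`):
the face of the subdrawing `D[W]` containing `F` is bounded by a cycle `C_W` on vertices
of `W`, and `Δ` is the closed disc bounded by `D[C_W]` disjoint from `F`. -/
def IsHull (D : GoodDrawing n X) (F : Set X) (W : Set (Fin n)) (Δ : Set X) : Prop :=
  ∃ (m : ℕ) (c : Fin (m + 3) → Fin n), Function.Injective c ∧ (∀ i, c i ∈ W) ∧
    (∃ G : Set X, IsFaceOf (D.image W) G ∧ F ⊆ G ∧ frontier G = D.cycCurve c) ∧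
    IsClosedSide (D.cycCurve c) Δ ∧ Disjoint F Δ

/-- The data of the two local sides `C 0`, `C 1` of the arc `D[uv]` at an interior
point `p` of the arc. -/
def LocalSides (D : GoodDrawing n X) (u v : Fin n) (p : X) (C : Fin 2 → Set X) : Prop :=
  p ∈ D.arc u v ∧ p ≠ D.vtx u ∧ p ≠ D.vtx v ∧
    ∃ V ∈ nhds p, C 0 ∪ C 1 = V \ D.arc u v ∧ Disjoint (C 0) (C 1) ∧
      IsPreconnected (C 0) ∧ IsPreconnected (C 1) ∧ (C 0).Nonempty ∧ (C 1).Nonempty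

/-- Relative to the outer face `F` and the local sides `C` of `D[uv]` at `p`, the
vertex `w` is on side `i` of `uv`: the closed disc bounded by `D[{u,v,w}]` not
containing `F` lies locally on side `i` of `D[uv]`. -/
def OnSide (D : GoodDrawing n X) (F : Set X) (u v : Fin n) (p : X) (C : Fin 2 → Set X)
    (i : Fin 2) (w : Fin n) : Prop :=
  w ≠ u ∧ w ≠ v ∧ ∃ Δ : Set X, IsClosedSide (D.tri u v w) Δ ∧ ¬F ⊆ Δ ∧
    ∃ V ∈ nhds p, C i ∩ V ⊆ Δ

/-- `Side(uv, i)`: the set consisting of `u`, `v` and all vertices on side `i` of `uv`. -/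
def SideSet (D : GoodDrawing n X) (F : Set X) (u v : Fin n) (p : X) (C : Fin 2 → Set X)
    (i : Fin 2) : Set (Fin n) :=
  {u, v} ∪ {w : Fin n | D.OnSide F u v p C i w}

/-- The edge-arcs `D[uv]` and `D[xy]` cross: they share a non-vertex point. -/
def Crosses (D : GoodDrawing n X) (u v x y : Fin n) : Prop :=
  ∃ p : X, p ∈ D.arc u v ∩ D.arc x y ∧ p ∉ Set.range D.vtx

/-- The set of empty triangles of `D`: pairs of a 3-set of vertices together with an
open disc bounded by the corresponding triangle containing no vertex point. -/
def emptyTriangles (D : GoodDrawing n X) : Set (Finset (Fin n) × Set X) :=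
  {T | ∃ a b c : Fin n, a ≠ b ∧ a ≠ c ∧ b ≠ c ∧ T.1 = {a, b, c} ∧
    IsOpenSide (D.tri a b c) T.2 ∧ ∀ i, D.vtx i ∉ T.2}

end GoodDrawing

/-- A pseudoline in the plane. -/
def IsPseudoline (σ : Set Plane) : Prop :=
  IsClosed σ ∧ Nonempty (↥σ ≃ₜ ℝ) ∧ ¬IsPreconnected σᶜ

/-- An arrangement of pseudolines: any two distinct members meet in exactly one
point, at which they cross. -/
def IsArrangement (A : Finset (Set Plane)) : Prop :=
  (∀ σ ∈ A, IsPseudoline σ) ∧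
    ∀ σ ∈ A, ∀ τ ∈ A, σ ≠ τ →
      ∃ p : Plane, σ ∩ τ = {p} ∧ CrossesAt σ τ p ∧ CrossesAt τ σ p

/-- A planar good drawing of `K_n` is pseudolinear if some arrangement of pseudolines
contains, for each edge, a distinct pseudoline containing that edge-arc. -/
def GoodDrawing.Pseudolinear {n : ℕ} (D : GoodDrawing n Plane) : Prop :=
  ∃ (A : Finset (Set Plane)) (L : Fin n → Fin n → Set Plane), IsArrangement A ∧
    (∀ u v, u ≠ v → L u v ∈ A ∧ D.arc u v ⊆ L u v) ∧
    (∀ u v, L u v = L v u) ∧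
    ∀ u v x y : Fin n, u ≠ v → x ≠ y →
      ({u, v} : Finset (Fin n)) ≠ {x, y} → L u v ≠ L x y

/-!
Let `W` be an open region of the plane whose boundary lies on a closed line `e : ℝ → ℂ` that misses
`W`. Then `W` accumulates at every point of the line: otherwise, after an inversion centred at such
a point, `W` becomes a bounded region whose boundary lies on a closed line, and retracting it onto
this line while fixing everything else gives a non-surjective map `ℂ → ℂ` equal to the identity near
infinity. Logarithms exist on `ℂ` but not on a circle, so there is no such map.

Hence every component of the complement of a pseudoline `σ` is unbounded and has all of `σ` in its
closure, and a curve crossing `σ` at its only common point with it does not return to the component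
that it came from. The open disc bounded by the triangle `abc` misses the pseudoline `L a b`, since
the two parts of `L a b` beyond the arc `ab` are unbounded and avoid the triangle. It even lies on
the same side of `L a b` as `c`, since any other side avoids the triangle and is unbounded.
An arc that starts in the disc and ends in the closed disc therefore stays strictly on the inner
side of all three pseudolines until it ends, and cannot meet the triangle before.

On the sphere, a closed side of a triangle that misses the projection point is compact, so it comes
from a bounded closed side in the plane.
-/

section PlaneTopology

open Filter Bornology

theorem exists_continuous_exp_eq {X : Type*} [TopologicalSpace X] [SimplyConnectedSpace X]
    [LocallyPathConnectedSpace X] {f : X → ℂ} (hf : Continuous f) (hf0 : ∀ x, f x ≠ 0) :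
    ∃ g : X → ℂ, Continuous g ∧ ∀ x, Complex.exp (g x) = f x := by
  obtain ⟨x₀⟩ : Nonempty X := inferInstance
  obtain ⟨g, ⟨-, hg⟩, -⟩ := Complex.isCoveringMapOn_exp.existsUnique_continuousMap_lifts
    ⟨f, hf⟩ (Complex.exp_log (hf0 x₀)) hf0
  exact ⟨g, g.continuous, congrFun hg⟩

theorem not_exists_exp_eq_sub_on_sphere {g : ℂ → ℂ} {q : ℂ} {r : ℝ} (hr : 0 < r)
    (hg : ContinuousOn g (Metric.sphere q r)) :
    ¬∀ z ∈ Metric.sphere q r, Complex.exp (g z) = z - q := by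
  intro hexp
  set ψ : ℝ → ℂ := fun θ => g (circleMap q r θ) - θ * Complex.I with hψ
  have hmem (θ : ℝ) : circleMap q r θ ∈ Metric.sphere q r := circleMap_mem_sphere q hr.le θ
  have hψc : Continuous ψ :=
    (hg.comp_continuous (continuous_circleMap q r) hmem).sub (by fun_prop)
  have hψexp (θ : ℝ) : Complex.exp (ψ θ) = r := by
    rw [hψ, Complex.exp_sub, hexp _ (hmem θ), circleMap_sub_center, circleMap_zero,
      mul_div_cancel_right₀ _ (Complex.exp_ne_zero _)]
  have h0 : ψ 0 = ψ (2 * Real.pi) := by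
    refine Complex.isCoveringMap_exp.const_of_comp hψc (fun θ θ' => ?_) _ _
    exact Subtype.ext ((hψexp θ).trans (hψexp θ').symm)
  have hper : circleMap q r (2 * Real.pi) = circleMap q r 0 := by
    simpa only [zero_add] using periodic_circleMap q r 0
  simp only [hψ, hper, sub_right_inj, Complex.ofReal_zero, zero_mul] at h0
  simp [Real.pi_ne_zero] at h0

theorem surjective_of_eventually_eq_id {f : ℂ → ℂ} (hf : Continuous f)
    (hid : ∀ᶠ z in cobounded ℂ, f z = z) : Function.Surjective f := by
  intro q
  by_contra! hq
  obtain ⟨g, hg, hexp⟩ :=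
    exists_continuous_exp_eq (f := fun z => f z - q) (by fun_prop) fun z => sub_ne_zero.2 (hq z)
  obtain ⟨r, -, hr⟩ := (Metric.hasBasis_cobounded_compl_closedBall q).eventually_iff.1 hid
  refine not_exists_exp_eq_sub_on_sphere (q := q) (r := max r 0 + 1) (by positivity)
    hg.continuousOn fun z hz => ?_
  rw [hexp, hr]
  simp only [mem_compl_iff, Metric.mem_closedBall, not_le, Metric.mem_sphere.1 hz]
  linarith [le_max_left r 0]

theorem subset_range_of_frontier_subset {Y : Type*} [TopologicalSpace Y] [TietzeExtension.{0} Y]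
    {e : Y → ℂ} (he : IsClosedEmbedding e) {W : Set ℂ} (hW : IsBounded W)
    (hfr : frontier W ⊆ range e) : W ⊆ range e := by
  classical
  obtain ⟨ρ, hρ⟩ := (⟨id, continuous_id⟩ : C(Y, Y)).exists_extension' he
  have hfix : ∀ z ∈ range e, e (ρ z) = z := by
    rintro _ ⟨y, rfl⟩
    exact congrArg e (congrFun hρ y)
  have hcont : Continuous (W.piecewise (e ∘ ρ) id) :=
    Continuous.piecewise (fun z hz => hfix z (hfr hz))
      (he.continuous.comp ρ.continuous) continuous_id
  have hid : ∀ᶠ z in cobounded ℂ, W.piecewise (e ∘ ρ) id z = z := by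
    filter_upwards [hW] with z hz using piecewise_eq_of_notMem _ _ _ hz
  -- The map retracting `W` onto the line and fixing the rest misses `W \ range e`.
  intro q hqW
  obtain ⟨z, hz⟩ := surjective_of_eventually_eq_id hcont hid q
  by_cases hzW : z ∈ W
  · rw [piecewise_eq_of_mem _ _ _ hzW] at hz
    exact hz ▸ mem_range_self (ρ z)
  · rw [piecewise_eq_of_notMem _ _ _ hzW] at hz
    exact absurd (show z = q from hz) (ne_of_mem_of_not_mem hqW hzW).symm

-- Since `0⁻¹ = 0`, the conjugate sends `0` to `0`: this is the point at infinity of the old line.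
theorem isClosedEmbedding_inv_comp_inv {𝕜 𝕜' : Type*} [NontriviallyNormedField 𝕜] [ProperSpace 𝕜]
    [NontriviallyNormedField 𝕜'] [ProperSpace 𝕜'] {e : 𝕜 → 𝕜'} (he : IsClosedEmbedding e)
    (he0 : e 0 = 0) : IsClosedEmbedding fun s => (e s⁻¹)⁻¹ := by
  have hne {s : 𝕜} (hs : s ≠ 0) : e s ≠ 0 := fun h => hs (he.injective (h.trans he0.symm))
  have hcob : Tendsto e (cobounded 𝕜) (cobounded 𝕜') := by
    simpa only [Metric.cobounded_eq_cocompact] using he.tendsto_cocompact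
  have hpunct : Tendsto e (𝓝[≠] 0) (𝓝[≠] 0) := by
    refine tendsto_nhdsWithin_iff.2 ⟨he0 ▸ he.continuous.continuousWithinAt, ?_⟩
    filter_upwards [self_mem_nhdsWithin] with s hs using hne hs
  have hcont : Continuous fun s => (e s⁻¹)⁻¹ := by
    refine continuous_iff_continuousAt.2 fun s => ?_
    rcases eq_or_ne s 0 with rfl | hs
    · rw [continuousAt_iff_punctured_nhds, inv_zero, he0, inv_zero]
      exact tendsto_inv₀_cobounded.comp (hcob.comp tendsto_inv₀_nhdsNE_zero)
    · exact (he.continuous.continuousAt.comp (continuousAt_inv₀ hs)).inv₀ (hne (inv_ne_zero hs))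
  have hproper : IsProperMap fun s => (e s⁻¹)⁻¹ := by
    rw [isProperMap_iff_tendsto_cocompact, ← Metric.cobounded_eq_cocompact,
      ← Metric.cobounded_eq_cocompact]
    exact ⟨hcont, tendsto_inv₀_nhdsNE_zero.comp (hpunct.comp tendsto_inv₀_cobounded')⟩
  exact .of_continuous_injective_isClosedMap hcont
    (inv_injective.comp (he.injective.comp inv_injective)) hproper.isClosedMap

theorem zero_mem_closure_of_frontier_subset {e : ℝ → ℂ} (he : IsClosedEmbedding e)
    (he0 : e 0 = 0) {W : Set ℂ} (hne : W.Nonempty) (hdisj : Disjoint W (range e))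
    (hfr : frontier W ⊆ range e) : (0 : ℂ) ∈ closure W := by
  by_contra h0
  have hbdd : IsBounded (Inv.inv ⁻¹' W) := by
    rw [mem_closure_iff_frequently, not_frequently] at h0
    exact tendsto_inv₀_cobounded.eventually h0
  have hfr' : frontier (Inv.inv ⁻¹' W) ⊆ range fun s => (e s⁻¹)⁻¹ := by
    intro z hz
    rcases eq_or_ne z 0 with rfl | hz0
    · exact ⟨0, by simp only [inv_zero, he0]⟩
    have hinv (A : Set ℂ) : ContinuousWithinAt Inv.inv A z :=
      (continuousAt_inv₀ hz0).continuousWithinAt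
    rw [frontier_eq_closure_inter_closure] at hz
    obtain ⟨t, ht⟩ : z⁻¹ ∈ range e := by
      refine hfr ?_
      rw [frontier_eq_closure_inter_closure]
      exact ⟨(hinv _).mem_closure hz.1 (mapsTo_preimage _ _),
        (hinv _).mem_closure hz.2 (mapsTo_preimage _ Wᶜ)⟩
    exact ⟨t⁻¹, by simp only [inv_inv, ht]⟩
  obtain ⟨w, hw⟩ := hne
  obtain ⟨s, hs⟩ := subset_range_of_frontier_subset (isClosedEmbedding_inv_comp_inv he he0)
    hbdd hfr' (show w⁻¹ ∈ Inv.inv ⁻¹' W by rwa [mem_preimage, inv_inv])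
  exact disjoint_left.1 hdisj hw ⟨s⁻¹, inv_injective hs⟩

theorem range_subset_closure_of_frontier_subset {e : ℝ → Plane} (he : IsClosedEmbedding e)
    {W : Set Plane} (hne : W.Nonempty) (hdisj : Disjoint W (range e))
    (hfr : frontier W ⊆ range e) : range e ⊆ closure W := by
  rintro _ ⟨t, rfl⟩
  let φ : Plane ≃ₜ ℂ := Complex.orthonormalBasisOneI.repr.symm.toHomeomorph.trans
    (Homeomorph.subRight (Complex.orthonormalBasisOneI.repr.symm (e t)))
  have hφt : φ (e t) = 0 := sub_self _
  have hrange : range (φ ∘ e ∘ Homeomorph.addRight t) = φ '' range e := by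
    rw [range_comp, (Homeomorph.addRight t).surjective.range_comp]
  have h0 : (0 : ℂ) ∈ closure (φ '' W) := by
    refine zero_mem_closure_of_frontier_subset (e := φ ∘ e ∘ Homeomorph.addRight t)
      (φ.isClosedEmbedding.comp (he.comp (Homeomorph.addRight t).isClosedEmbedding)) ?_
      (hne.image φ) ?_ ?_
    · simpa only [Function.comp_apply, Homeomorph.coe_addRight, zero_add] using hφt
    · rwa [hrange, disjoint_image_iff φ.injective]
    · rw [hrange, ← φ.image_frontier]
      exact image_mono hfr
  rwa [← φ.image_closure, ← hφt, φ.injective.mem_set_image] at h0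

end PlaneTopology

section ComplementComponents

open Bornology

theorem closure_connectedComponentIn_compl_subset {X : Type*} [TopologicalSpace X] (T : Set X)
    (x : X) : closure (connectedComponentIn Tᶜ x) ⊆ connectedComponentIn Tᶜ x ∪ T := by
  intro z hz
  by_cases hzT : z ∈ T
  · exact Or.inr hzT
  obtain ⟨y, hy⟩ := closure_nonempty_iff.1 ⟨z, hz⟩
  have hinsert : IsPreconnected (insert z (connectedComponentIn Tᶜ x)) :=
    isPreconnected_connectedComponentIn.subset_closure (subset_insert _ _)
      (insert_subset hz subset_closure)
  rw [connectedComponentIn_eq hy] at hinsert ⊢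
  exact Or.inl (hinsert.subset_connectedComponentIn
    (Or.inr (mem_connectedComponentIn (connectedComponentIn_subset _ _ hy)))
    (insert_subset hzT (connectedComponentIn_subset _ _)) (mem_insert _ _))

theorem frontier_connectedComponentIn_compl_subset {X : Type*} [TopologicalSpace X]
    [LocallyConnectedSpace X] {T : Set X} (hT : IsClosed T) (x : X) :
    frontier (connectedComponentIn Tᶜ x) ⊆ T := by
  rw [hT.isOpen_compl.connectedComponentIn.frontier_eq, sdiff_subset_iff]
  exact closure_connectedComponentIn_compl_subset T x

theorem disjoint_connectedComponentIn_compl_of_not_isBounded {X : Type*} [TopologicalSpace X]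
    [Bornology X] {P T : Set X} {q : X} (hP : IsPreconnected P) (hPT : Disjoint P T)
    (hPb : ¬IsBounded P) (hb : IsBounded (connectedComponentIn Tᶜ q)) :
    Disjoint (connectedComponentIn Tᶜ q) P := by
  refine disjoint_left.2 fun z hz hzP => hPb (hb.subset ?_)
  rw [connectedComponentIn_eq hz]
  exact hP.subset_connectedComponentIn hzP hPT.subset_compl_right

theorem isBounded_of_isBounded_image {X Y : Type*} [PseudoMetricSpace X] [PseudoMetricSpace Y]
    [ProperSpace Y] {e : X → Y} (he : IsClosedEmbedding e) {S : Set X}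
    (hS : IsBounded (e '' S)) : IsBounded S :=
  (he.isCompact_preimage hS.isCompact_closure).isBounded.subset
    (image_subset_iff.1 subset_closure)

theorem disjoint_connectedComponentIn_compl_range {X : Type*} [PseudoMetricSpace X] [ProperSpace X]
    {e : ℝ → X} (he : IsClosedEmbedding e) {s t : ℝ} {T : Set X}
    (hT : T ∩ range e = e '' Icc s t) {q : X} (hb : IsBounded (connectedComponentIn Tᶜ q)) :
    Disjoint (connectedComponentIn Tᶜ q) (range e) := by
  have hray {I : Set ℝ} (hI : IsPreconnected I) (hIb : ¬IsBounded I) (hIst : Disjoint I (Icc s t)) :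
      Disjoint (connectedComponentIn Tᶜ q) (e '' I) := by
    refine disjoint_connectedComponentIn_compl_of_not_isBounded
      (hI.image e he.continuous.continuousOn) ?_ (mt (isBounded_of_isBounded_image he) hIb) hb
    rw [disjoint_left]
    rintro _ ⟨r, hr, rfl⟩ hrT
    have : e r ∈ e '' Icc s t := hT ▸ ⟨hrT, mem_range_self r⟩
    exact disjoint_left.1 hIst hr (he.injective.mem_set_image.1 this)
  refine disjoint_right.2 ?_
  rintro _ ⟨r, rfl⟩ hr
  rcases lt_or_ge r s with hrs | hsr
  · refine disjoint_left.1 (hray isPreconnected_Iio (fun h => not_bddBelow_Iio s h.bddBelow) ?_) hr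
      (mem_image_of_mem e (mem_Iio.2 hrs))
    exact disjoint_left.2 fun x hx hx' => hx.not_ge hx'.1
  rcases lt_or_ge t r with htr | hrt
  · refine disjoint_left.1 (hray isPreconnected_Ioi (fun h => not_bddAbove_Ioi t h.bddAbove) ?_) hr
      (mem_image_of_mem e (mem_Ioi.2 htr))
    exact disjoint_left.2 fun x hx hx' => hx.not_ge hx'.2
  · exact connectedComponentIn_subset _ _ hr (hT.symm.subset (mem_image_of_mem e ⟨hsr, hrt⟩)).1

end ComplementComponents

section ArcParametrization

theorem image_Icc_eq_uIcc {g : ℝ → ℝ} {a b : ℝ} (hab : a ≤ b) (hg : ContinuousOn g (Icc a b))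
    (hinj : InjOn g (Icc a b)) : g '' Icc a b = uIcc (g a) (g b) := by
  rcases hg.strictMonoOn_of_injOn_Icc' hab hinj with hmono | hanti
  · rw [hg.image_Icc_of_monotoneOn hab hmono.monotoneOn, uIcc_of_le]
    exact hmono.monotoneOn (left_mem_Icc.2 hab) (right_mem_Icc.2 hab) hab
  · rw [hg.image_Icc_of_antitoneOn hab hanti.antitoneOn, uIcc_of_ge]
    exact hanti.antitoneOn (left_mem_Icc.2 hab) (right_mem_Icc.2 hab) hab

theorem exists_oriented_parametrization {X : Type*} [TopologicalSpace X] {e f : ℝ → X}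
    (he : IsClosedEmbedding e) (hf : ContinuousOn f (Icc 0 1)) (hinj : InjOn f (Icc 0 1))
    (hfe : f '' Icc 0 1 ⊆ range e) :
    ∃ (e' : ℝ → X) (s t : ℝ), IsClosedEmbedding e' ∧ range e' = range e ∧ s < t ∧
      e' s = f 0 ∧ e' t = f 1 ∧ e' '' Icc s t = f '' Icc 0 1 := by
  have h0 : (0 : ℝ) ∈ Icc (0 : ℝ) 1 := left_mem_Icc.2 zero_le_one
  have h1 : (1 : ℝ) ∈ Icc (0 : ℝ) 1 := right_mem_Icc.2 zero_le_one
  obtain ⟨g, hg⟩ : ∃ g : ℝ → ℝ, EqOn (e ∘ g) f (Icc 0 1) :=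
    ⟨Function.invFun e ∘ f, fun x hx => Function.invFun_eq (hfe (mem_image_of_mem f hx))⟩
  have hgc : ContinuousOn g (Icc 0 1) := he.isInducing.continuousOn_iff.2 (hf.congr hg)
  have hginj : InjOn g (Icc 0 1) := (hinj.congr hg.symm).of_comp
  have himage : e '' uIcc (g 0) (g 1) = f '' Icc 0 1 := by
    rw [← image_Icc_eq_uIcc zero_le_one hgc hginj, ← image_comp, hg.image_eq]
  rcases lt_or_gt_of_ne (hginj.ne h0 h1 zero_ne_one) with hlt | hgt
  · exact ⟨e, g 0, g 1, he, rfl, hlt, hg h0, hg h1, by rw [← uIcc_of_lt hlt, himage]⟩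
  · refine ⟨e ∘ Neg.neg, -g 0, -g 1, he.comp (Homeomorph.neg ℝ).isClosedEmbedding,
      neg_surjective.range_comp e, neg_lt_neg hgt, ?_, ?_, ?_⟩
    · simpa only [Function.comp_apply, neg_neg] using hg h0
    · simpa only [Function.comp_apply, neg_neg] using hg h1
    · rw [image_comp, image_neg_Icc, neg_neg, neg_neg, ← uIcc_of_gt hgt, himage]

end ArcParametrization

namespace IsPseudoline

open Bornology

variable {σ : Set Plane}

theorem exists_isClosedEmbedding (hσ : IsPseudoline σ) :
    ∃ e : ℝ → Plane, IsClosedEmbedding e ∧ range e = σ := by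
  obtain ⟨hclosed, ⟨φ⟩, -⟩ := hσ
  refine ⟨Subtype.val ∘ φ.symm,
    hclosed.isClosedEmbedding_subtypeVal.comp φ.symm.isClosedEmbedding, ?_⟩
  rw [φ.symm.surjective.range_comp, Subtype.range_coe]

theorem subset_closure_connectedComponentIn (hσ : IsPseudoline σ) {x : Plane} (hx : x ∉ σ) :
    σ ⊆ closure (connectedComponentIn σᶜ x) := by
  obtain ⟨e, he, rfl⟩ := hσ.exists_isClosedEmbedding
  exact range_subset_closure_of_frontier_subset he ⟨x, mem_connectedComponentIn hx⟩
    (disjoint_compl_left.mono_left (connectedComponentIn_subset _ _))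
    (frontier_connectedComponentIn_compl_subset he.isClosed_range x)

theorem not_isBounded_connectedComponentIn (hσ : IsPseudoline σ) {x : Plane} (hx : x ∉ σ) :
    ¬IsBounded (connectedComponentIn σᶜ x) := by
  intro hb
  have hσb := (Metric.isBounded_closure_of_isBounded hb).subset
    (hσ.subset_closure_connectedComponentIn hx)
  obtain ⟨e, he, rfl⟩ := hσ.exists_isClosedEmbedding
  rw [← image_univ] at hσb
  exact not_bddAbove_univ (isBounded_of_isBounded_image he hσb).bddAbove

theorem not_diff_subset_connectedComponentIn (hσ : IsPseudoline σ) {γ : Set Plane} {p : Plane}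
    (hc : CrossesAt σ γ p) (x : Plane) : ¬γ \ σ ⊆ connectedComponentIn σᶜ x := by
  intro hγ
  obtain ⟨hpσ, -, hlocal⟩ := hc
  obtain ⟨V, hV, -, C₁, C₂, hCV, -, hC₁, hC₂, hγ₁, hγ₂⟩ := hlocal univ Filter.univ_mem
  have hside {C : Set Plane} (hC : IsPreconnected C) (hCV : C ⊆ V \ σ) (hγC : (γ ∩ C).Nonempty) :
      C ⊆ connectedComponentIn σᶜ x := by
    obtain ⟨z, hzγ, hzC⟩ := hγC
    rw [connectedComponentIn_eq (hγ ⟨hzγ, (hCV hzC).2⟩)]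
    exact hC.subset_connectedComponentIn hzC fun w hw => (hCV hw).2
  have hVx : V \ σ ⊆ connectedComponentIn σᶜ x := by
    have h₁ := hside hC₁ (hCV ▸ subset_union_left) hγ₁
    have h₂ := hside hC₂ (hCV ▸ subset_union_right) hγ₂
    exact hCV ▸ union_subset h₁ h₂
  refine hσ.2.2 ?_
  suffices h : σᶜ ⊆ connectedComponentIn σᶜ x by
    rw [h.antisymm (connectedComponentIn_subset _ _)]
    exact isPreconnected_connectedComponentIn
  intro y hy
  obtain ⟨w, hwV, hwy⟩ :=
    mem_closure_iff_nhds.1 (hσ.subset_closure_connectedComponentIn hy hpσ) V hV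
  rw [connectedComponentIn_eq (hVx ⟨hwV, connectedComponentIn_subset _ _ hwy⟩),
    ← connectedComponentIn_eq hwy]
  exact mem_connectedComponentIn hy

theorem image_Ico_subset_connectedComponentIn (hσ : IsPseudoline σ) {e : ℝ → Plane}
    (he : Continuous e) (hinj : Function.Injective e) {p : Plane} (hp : range e ∩ σ = {p})
    (hc : CrossesAt σ (range e) p) {x : Plane} {s t : ℝ} (hs : e s ∈ connectedComponentIn σᶜ x)
    (ht : e t ∈ connectedComponentIn σᶜ x ∪ σ) :
    e '' Ico s t ⊆ connectedComponentIn σᶜ x := by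
  obtain ⟨t₀, rfl⟩ := hc.2.1
  have hσt₀ {r : ℝ} (hr : e r ∈ σ) : r = t₀ := hinj (hp.subset ⟨mem_range_self r, hr⟩)
  have hside {I : Set ℝ} (hI : IsPreconnected I) {r : ℝ} (hrI : r ∈ I) (ht₀ : t₀ ∉ I)
      (hr : e r ∈ connectedComponentIn σᶜ x) : e '' I ⊆ connectedComponentIn σᶜ x := by
    rw [connectedComponentIn_eq hr]
    refine (hI.image e he.continuousOn).subset_connectedComponentIn (mem_image_of_mem e hrI) ?_
    rintro _ ⟨u, hu, rfl⟩ huσ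
    exact ht₀ (hσt₀ huσ ▸ hu)
  have hst₀ : s ≠ t₀ := by
    rintro rfl
    exact connectedComponentIn_subset _ _ hs hc.1
  by_cases hst : t₀ ∈ Ico s t
  · have ht' := ht.resolve_right fun htσ => hst.2.ne' (hσt₀ htσ)
    have hleft := hside isPreconnected_Iio (lt_of_le_of_ne hst.1 hst₀) self_notMem_Iio hs
    have hright := hside isPreconnected_Ioi hst.2 self_notMem_Ioi ht'
    refine absurd ?_ (hσ.not_diff_subset_connectedComponentIn hc x)
    rintro _ ⟨⟨r, rfl⟩, hr⟩
    rcases lt_trichotomy r t₀ with hlt | rfl | hgt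
    · exact hleft (mem_image_of_mem e hlt)
    · exact absurd hc.1 hr
    · exact hright (mem_image_of_mem e hgt)
  · rcases lt_or_ge s t with hlt | hle
    · exact hside isPreconnected_Ico (left_mem_Ico.2 hlt) hst hs
    · simp only [Ico_eq_empty hle.not_gt, image_empty, empty_subset]

end IsPseudoline

namespace GoodDrawing

section Basic

variable {n : ℕ} {X : Type*} [TopologicalSpace X] (D : GoodDrawing n X) {a b c u v x y : Fin n}

theorem vtx_left_mem_arc (huv : u ≠ v) : D.vtx u ∈ D.arc u v := by
  obtain ⟨f, -, -, hf0, -, harc⟩ := D.isArc u v huv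
  exact harc ▸ ⟨0, left_mem_Icc.2 zero_le_one, hf0⟩

theorem vtx_right_mem_arc (huv : u ≠ v) : D.vtx v ∈ D.arc u v :=
  D.arc_symm u v ▸ D.vtx_left_mem_arc huv.symm

theorem isCompact_arc (huv : u ≠ v) : IsCompact (D.arc u v) := by
  obtain ⟨f, hf, -, -, -, harc⟩ := D.isArc u v huv
  exact harc ▸ isCompact_Icc.image_of_continuousOn hf

theorem isPreconnected_arc_diff_vtx_right (huv : u ≠ v) :
    IsPreconnected (D.arc u v \ {D.vtx v}) := by
  obtain ⟨f, hf, hinj, -, hf1, harc⟩ := D.isArc u v huv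
  have h1 : (1 : ℝ) ∈ Icc (0 : ℝ) 1 := right_mem_Icc.2 zero_le_one
  rw [harc, ← hf1, ← image_singleton,
    ← hinj.image_sdiff_subset (singleton_subset_iff.2 h1), Icc_sdiff_right]
  exact isPreconnected_Ico.image f (hf.mono Ico_subset_Icc_self)

theorem tri_rotate (a b c : Fin n) : D.tri a b c = D.tri b c a := by
  rw [tri, tri, D.arc_symm c a, D.arc_symm b a, union_assoc, union_comm, union_right_comm]

theorem arc_subset_tri (a b c : Fin n) : D.arc a b ⊆ D.tri a b c :=
  subset_union_left.trans subset_union_left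

theorem isCompact_tri (hab : a ≠ b) (hac : a ≠ c) (hbc : b ≠ c) : IsCompact (D.tri a b c) :=
  ((D.isCompact_arc hab).union (D.isCompact_arc hbc)).union (D.isCompact_arc hac)

theorem eq_of_vtx_mem_arc (huv : u ≠ v) (hx : D.vtx x ∈ D.arc u v) : x = u ∨ x = v := by
  by_contra! h
  exact D.vtx_not_mem u v x huv h.1 h.2 hx

theorem eq_of_vtx_mem_tri (hab : a ≠ b) (hac : a ≠ c) (hbc : b ≠ c)
    (hx : D.vtx x ∈ D.tri a b c) : x = a ∨ x = b ∨ x = c := by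
  rcases hx with (hx | hx) | hx
  · exact (D.eq_of_vtx_mem_arc hab hx).imp_right .inl
  · exact .inr (D.eq_of_vtx_mem_arc hbc hx)
  · exact (D.eq_of_vtx_mem_arc hac hx).imp_right .inr

theorem arc_subset_tri_of_vtx_mem (hab : a ≠ b) (hac : a ≠ c) (hbc : b ≠ c) (hxy : x ≠ y)
    (hx : D.vtx x ∈ D.tri a b c) (hy : D.vtx y ∈ D.tri a b c) : D.arc x y ⊆ D.tri a b c := by
  have hAB : D.arc a b ⊆ D.tri a b c := D.arc_subset_tri a b c
  have hBC : D.arc b c ⊆ D.tri a b c := D.tri_rotate a b c ▸ D.arc_subset_tri b c a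
  have hAC : D.arc a c ⊆ D.tri a b c := subset_union_right
  rcases D.eq_of_vtx_mem_tri hab hac hbc hx with rfl | rfl | rfl <;>
    rcases D.eq_of_vtx_mem_tri hab hac hbc hy with rfl | rfl | rfl <;>
    first
      | exact absurd rfl hxy
      | assumption
      | rwa [D.arc_symm]

end Basic

/-- A choice of pseudolines witnessing that `D` is pseudolinear: `L u v` extends the edge-arc `uv`,
and the pseudolines of two distinct edges cross in a single point. -/
structure PseudolineExtension {n : ℕ} (D : GoodDrawing n Plane) (L : Fin n → Fin n → Set Plane) :
    Prop where
  isPseudoline {u v : Fin n} : u ≠ v → IsPseudoline (L u v)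
  arc_subset {u v : Fin n} : u ≠ v → D.arc u v ⊆ L u v
  symm (u v : Fin n) : L u v = L v u
  exists_crossing {u v x y : Fin n} : u ≠ v → x ≠ y → u ≠ x → u ≠ y →
    ∃ p, L u v ∩ L x y = {p} ∧ CrossesAt (L x y) (L u v) p

theorem Pseudolinear.exists_pseudolineExtension {n : ℕ} {D : GoodDrawing n Plane}
    (hD : D.Pseudolinear) : ∃ L, D.PseudolineExtension L := by
  obtain ⟨A, L, ⟨hA, hcross⟩, hL, hsymm, hne⟩ := hD
  refine ⟨L, fun h => hA _ (hL _ _ h).1, fun h => (hL _ _ h).2, hsymm, ?_⟩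
  intro u v x y huv hxy hux huy
  have hpair : ({u, v} : Finset (Fin n)) ≠ {x, y} := fun h => by
    have hu : u ∈ ({x, y} : Finset (Fin n)) := h ▸ Finset.mem_insert_self u {v}
    simp [hux, huy] at hu
  obtain ⟨p, hp, -, hc⟩ :=
    hcross _ (hL u v huv).1 _ (hL x y hxy).1 (hne u v x y huv hxy hpair)
  exact ⟨p, hp, hc⟩

namespace PseudolineExtension

open Bornology

variable {n : ℕ} {D : GoodDrawing n Plane} {L : Fin n → Fin n → Set Plane} {a b c x y : Fin n}

theorem vtx_left_mem (hL : D.PseudolineExtension L) (hab : a ≠ b) : D.vtx a ∈ L a b :=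
  hL.arc_subset hab (D.vtx_left_mem_arc hab)

theorem vtx_right_mem (hL : D.PseudolineExtension L) (hab : a ≠ b) : D.vtx b ∈ L a b :=
  hL.arc_subset hab (D.vtx_right_mem_arc hab)

theorem inter_eq_singleton_vtx (hL : D.PseudolineExtension L) (hab : a ≠ b) (hac : a ≠ c)
    (hbc : b ≠ c) : L a b ∩ L a c = {D.vtx a} := by
  obtain ⟨p, hp, -⟩ := hL.exists_crossing hab.symm hac hab.symm hbc
  rw [hL.symm] at hp
  have ha : D.vtx a ∈ ({p} : Set Plane) := hp ▸ ⟨hL.vtx_left_mem hab, hL.vtx_left_mem hac⟩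
  rw [hp, mem_singleton_iff.1 ha]

theorem tri_inter_eq_arc (hL : D.PseudolineExtension L) (hab : a ≠ b) (hac : a ≠ c)
    (hbc : b ≠ c) : D.tri a b c ∩ L a b = D.arc a b := by
  refine Subset.antisymm ?_ (subset_inter (D.arc_subset_tri a b c) (hL.arc_subset hab))
  have hac_inter := hL.inter_eq_singleton_vtx hab hac hbc
  have hbc_inter := hL.inter_eq_singleton_vtx hab.symm hbc hac
  rw [hL.symm] at hbc_inter
  rintro z ⟨(hz | hz) | hz, hzL⟩
  · exact hz
  · rw [mem_singleton_iff.1 (hbc_inter.subset ⟨hzL, hL.arc_subset hbc hz⟩)]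
    exact D.vtx_right_mem_arc hab
  · rw [mem_singleton_iff.1 (hac_inter.subset ⟨hzL, hL.arc_subset hac hz⟩)]
    exact D.vtx_left_mem_arc hab

theorem arc_diff_subset_side (hL : D.PseudolineExtension L) (hab : a ≠ b) (hac : a ≠ c)
    (hbc : b ≠ c) : D.arc a c \ L a b ⊆ connectedComponentIn (L a b)ᶜ (D.vtx c) := by
  have hdiff : D.arc a c \ L a b = D.arc c a \ {D.vtx a} := by
    rw [← hL.inter_eq_singleton_vtx hab hac hbc, D.arc_symm c a]
    ext z
    have hzac : z ∈ D.arc a c → z ∈ L a c := fun hz => hL.arc_subset hac hz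
    simp only [mem_sdiff, mem_inter_iff]
    tauto
  rw [hdiff]
  refine (D.isPreconnected_arc_diff_vtx_right hac.symm).subset_connectedComponentIn ?_ ?_
  · exact ⟨D.vtx_left_mem_arc hac.symm, fun h => hac (D.vtx_inj h).symm⟩
  · exact hdiff ▸ fun z hz => hz.2

theorem tri_diff_subset_side (hL : D.PseudolineExtension L) (hab : a ≠ b) (hac : a ≠ c)
    (hbc : b ≠ c) : D.tri a b c \ L a b ⊆ connectedComponentIn (L a b)ᶜ (D.vtx c) := by
  rintro z ⟨(hz | hz) | hz, hzL⟩
  · exact absurd (hL.arc_subset hab hz) hzL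
  · rw [hL.symm] at hzL ⊢
    exact hL.arc_diff_subset_side hab.symm hbc hac ⟨hz, hzL⟩
  · exact hL.arc_diff_subset_side hab hac hbc ⟨hz, hzL⟩

theorem exists_parametrization (hL : D.PseudolineExtension L) (hab : a ≠ b) :
    ∃ (e : ℝ → Plane) (s t : ℝ), IsClosedEmbedding e ∧ range e = L a b ∧
      e s = D.vtx a ∧ e t = D.vtx b ∧ e '' Icc s t = D.arc a b := by
  obtain ⟨e, he, hrange⟩ := (hL.isPseudoline hab).exists_isClosedEmbedding
  obtain ⟨f, hf, hinj, hf0, hf1, harc⟩ := D.isArc a b hab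
  obtain ⟨e', s, t, he', hrange', -, hs, ht, himage⟩ :=
    exists_oriented_parametrization he hf hinj (by
      rw [← harc, hrange]
      exact hL.arc_subset hab)
  exact ⟨e', s, t, he', hrange'.trans hrange, hs.trans hf0, ht.trans hf1, himage.trans harc.symm⟩

theorem disjoint_of_isBounded (hL : D.PseudolineExtension L) (hab : a ≠ b) (hac : a ≠ c)
    (hbc : b ≠ c) {q : Plane} (hb : IsBounded (connectedComponentIn (D.tri a b c)ᶜ q)) :
    Disjoint (connectedComponentIn (D.tri a b c)ᶜ q) (L a b) := by
  obtain ⟨e, s, t, he, hrange, -, -, himage⟩ := hL.exists_parametrization hab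
  rw [← hrange]
  have hinter : D.tri a b c ∩ range e = e '' Icc s t := by
    rw [hrange, himage, hL.tri_inter_eq_arc hab hac hbc]
  exact disjoint_connectedComponentIn_compl_range he hinter hb

theorem subset_side_of_isBounded (hL : D.PseudolineExtension L) (hab : a ≠ b) (hac : a ≠ c)
    (hbc : b ≠ c) {q : Plane} (hb : IsBounded (connectedComponentIn (D.tri a b c)ᶜ q)) :
    connectedComponentIn (D.tri a b c)ᶜ q ⊆ connectedComponentIn (L a b)ᶜ (D.vtx c) := by
  by_contra hside
  obtain ⟨z, hz, hzc⟩ := not_subset.1 hside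
  have hdisj := hL.disjoint_of_isBounded hab hac hbc hb
  have hzL : z ∉ L a b := disjoint_left.1 hdisj hz
  refine (hL.isPseudoline hab).not_isBounded_connectedComponentIn hzL (hb.subset ?_)
  rw [connectedComponentIn_eq hz]
  refine isPreconnected_connectedComponentIn.subset_connectedComponentIn
    (mem_connectedComponentIn hzL) fun w hw hwT => hzc ?_
  have hwc := hL.tri_diff_subset_side hab hac hbc ⟨hwT, connectedComponentIn_subset _ _ hw⟩
  rw [connectedComponentIn_eq hwc, ← connectedComponentIn_eq hw]
  exact mem_connectedComponentIn hzL

theorem arc_diff_vtx_right_subset_side (hL : D.PseudolineExtension L) (hab : a ≠ b)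
    (hxy : x ≠ y) {z : Plane} (hx : D.vtx x ∈ connectedComponentIn (L a b)ᶜ z)
    (hy : D.vtx y ∈ connectedComponentIn (L a b)ᶜ z ∪ L a b) :
    D.arc x y \ {D.vtx y} ⊆ connectedComponentIn (L a b)ᶜ z := by
  have hxL : D.vtx x ∉ L a b := connectedComponentIn_subset _ _ hx
  have hxa : x ≠ a := by
    rintro rfl
    exact hxL (hL.vtx_left_mem hab)
  have hxb : x ≠ b := by
    rintro rfl
    exact hxL (hL.vtx_right_mem hab)
  obtain ⟨p, hp, hc⟩ := hL.exists_crossing hxy hab hxa hxb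
  obtain ⟨e, s, t, he, hrange, hs, ht, himage⟩ := hL.exists_parametrization hxy
  rw [← himage, ← ht, ← image_singleton, ← image_sdiff he.injective, Icc_sdiff_right]
  rw [← hrange] at hp hc
  exact (hL.isPseudoline hab).image_Ico_subset_connectedComponentIn he.continuous he.injective
    hp hc (hs ▸ hx) (ht ▸ hy)

theorem disjoint_arc_diff_vtx_right (hL : D.PseudolineExtension L) (hab : a ≠ b) (hac : a ≠ c)
    (hbc : b ≠ c) (hxy : x ≠ y) {q : Plane}
    (hb : IsBounded (connectedComponentIn (D.tri a b c)ᶜ q))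
    (hx : D.vtx x ∈ connectedComponentIn (D.tri a b c)ᶜ q)
    (hy : D.vtx y ∈ connectedComponentIn (D.tri a b c)ᶜ q ∪ D.tri a b c) :
    Disjoint (D.arc x y \ {D.vtx y}) (D.arc a b) := by
  have hside := hL.subset_side_of_isBounded hab hac hbc hb
  have hy' : D.vtx y ∈ connectedComponentIn (L a b)ᶜ (D.vtx c) ∪ L a b := by
    rcases hy with hy | hy
    · exact .inl (hside hy)
    · exact or_iff_not_imp_right.2 fun hyL => hL.tri_diff_subset_side hab hac hbc ⟨hy, hyL⟩
  exact disjoint_compl_left.mono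
    ((hL.arc_diff_vtx_right_subset_side hab hxy (hside hx) hy').trans
      (connectedComponentIn_subset _ _))
    (hL.arc_subset hab)

theorem arc_subset_of_vtx_mem (hL : D.PseudolineExtension L) (hab : a ≠ b) (hac : a ≠ c)
    (hbc : b ≠ c) (hxy : x ≠ y) {q : Plane}
    (hb : IsBounded (connectedComponentIn (D.tri a b c)ᶜ q))
    (hx : D.vtx x ∈ connectedComponentIn (D.tri a b c)ᶜ q)
    (hy : D.vtx y ∈ connectedComponentIn (D.tri a b c)ᶜ q ∪ D.tri a b c) :
    D.arc x y ⊆ connectedComponentIn (D.tri a b c)ᶜ q ∪ D.tri a b c := by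
  have hdisj : Disjoint (D.arc x y \ {D.vtx y}) (D.tri a b c) := by
    have hAB := hL.disjoint_arc_diff_vtx_right hab hac hbc hxy hb hx hy
    have hBC : Disjoint (D.arc x y \ {D.vtx y}) (D.arc b c) := by
      rw [D.tri_rotate] at hb hx hy
      exact hL.disjoint_arc_diff_vtx_right hbc hab.symm hac.symm hxy hb hx hy
    have hCA : Disjoint (D.arc x y \ {D.vtx y}) (D.arc c a) := by
      rw [← D.tri_rotate] at hb hx hy
      exact hL.disjoint_arc_diff_vtx_right hac.symm hbc.symm hab hxy hb hx hy
    rw [D.arc_symm c a] at hCA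
    exact (hAB.union_right hBC).union_right hCA
  have hsub : D.arc x y \ {D.vtx y} ⊆ connectedComponentIn (D.tri a b c)ᶜ q := by
    rw [connectedComponentIn_eq hx]
    exact (D.isPreconnected_arc_diff_vtx_right hxy).subset_connectedComponentIn
      ⟨D.vtx_left_mem_arc hxy, D.vtx_inj.ne hxy⟩ hdisj.subset_compl_right
  intro z hz
  rcases eq_or_ne z (D.vtx y) with rfl | hzy
  · exact hy
  · exact .inl (hsub ⟨hz, hzy⟩)

theorem convexDisc_of_isBounded (hL : D.PseudolineExtension L) (hab : a ≠ b) (hac : a ≠ c)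
    (hbc : b ≠ c) {Δ : Set Plane} (hΔ : IsClosedSide (D.tri a b c) Δ) (hb : IsBounded Δ) :
    D.ConvexDisc Δ := by
  obtain ⟨q, -, rfl⟩ := hΔ
  have hb' := hb.subset subset_union_left
  intro x y hxy hx hy
  by_cases hx' : D.vtx x ∈ connectedComponentIn (D.tri a b c)ᶜ q
  · exact hL.arc_subset_of_vtx_mem hab hac hbc hxy hb' hx' hy
  by_cases hy' : D.vtx y ∈ connectedComponentIn (D.tri a b c)ᶜ q
  · rw [D.arc_symm]
    exact hL.arc_subset_of_vtx_mem hab hac hbc hxy.symm hb' hy' hx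
  · exact (D.arc_subset_tri_of_vtx_mem hab hac hbc hxy (hx.resolve_left hx')
      (hy.resolve_left hy')).trans subset_union_right

end PseudolineExtension

end GoodDrawing

section ClosedSides

variable {X Y : Type*} [TopologicalSpace X] [TopologicalSpace Y]

theorem connectedComponentIn_eq_image_preimage {ψ : X → Y} (hψ : IsInducing ψ) {S : Set Y} {q : X}
    (hq : ψ q ∈ S) (hrange : connectedComponentIn S (ψ q) ⊆ range ψ) :
    connectedComponentIn S (ψ q) = ψ '' connectedComponentIn (ψ ⁻¹' S) q := by
  refine Subset.antisymm ?_ ?_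
  · rw [← image_preimage_eq_of_subset hrange]
    refine image_mono (IsPreconnected.subset_connectedComponentIn ?_
      (mem_connectedComponentIn hq) (preimage_mono (connectedComponentIn_subset _ _)))
    rw [← hψ.isPreconnected_image, image_preimage_eq_of_subset hrange]
    exact isPreconnected_connectedComponentIn
  · exact (isPreconnected_connectedComponentIn.image ψ
      hψ.continuous.continuousOn).subset_connectedComponentIn
      (mem_image_of_mem ψ (mem_connectedComponentIn hq))
      (image_subset_iff.2 (connectedComponentIn_subset _ _))

theorem IsClosedSide.isClosed {C Δ : Set X} (hC : IsClosed C) (hΔ : IsClosedSide C Δ) :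
    IsClosed Δ := by
  obtain ⟨q, -, rfl⟩ := hΔ
  refine isClosed_of_closure_subset ?_
  rw [closure_union, hC.closure_eq]
  exact union_subset (closure_connectedComponentIn_compl_subset C q) subset_union_right

theorem IsClosedSide.connectedComponentIn_subset_of_mem {A C Δ : Set X} (hΔ : IsClosedSide C Δ)
    (hCA : C ⊆ A) {p : X} (hpA : p ∉ A) (hp : p ∈ Δ) : connectedComponentIn Aᶜ p ⊆ Δ := by
  obtain ⟨q, -, rfl⟩ := hΔ
  rw [connectedComponentIn_eq (hp.resolve_right fun h => hpA (hCA h))]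
  exact (connectedComponentIn_mono p (compl_subset_compl.2 hCA)).trans subset_union_left

theorem IsClosedSide.exists_eq_image {ψ : X → Y} (hψ : IsEmbedding ψ) {C : Set X} {Δ : Set Y}
    (hΔ : IsClosedSide (ψ '' C) Δ) (hrange : Δ ⊆ range ψ) :
    ∃ Δ₀, IsClosedSide C Δ₀ ∧ Δ = ψ '' Δ₀ := by
  obtain ⟨_, hq, rfl⟩ := hΔ
  obtain ⟨q, rfl⟩ := hrange (.inl (mem_connectedComponentIn hq))
  refine ⟨_, ⟨q, fun h => hq (mem_image_of_mem ψ h), rfl⟩, ?_⟩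
  rw [connectedComponentIn_eq_image_preimage hψ.isInducing hq (subset_union_left.trans hrange),
    preimage_compl, hψ.injective.preimage_image, image_union]

end ClosedSides

section Transport

variable {X Y : Type*} [TopologicalSpace X] [TopologicalSpace Y] {ψ : X → Y}

theorem CrossesAt.image (hψ : IsOpenEmbedding ψ) {σ γ : Set X} {p : X} (h : CrossesAt σ γ p) :
    CrossesAt (ψ '' σ) (ψ '' γ) (ψ p) := by
  refine ⟨mem_image_of_mem ψ h.1, mem_image_of_mem ψ h.2.1, fun U hU => ?_⟩
  obtain ⟨V, hV, hVU, C₁, C₂, hCV, hdisj, hC₁, hC₂, hγ₁, hγ₂⟩ :=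
    h.2.2 (ψ ⁻¹' U) (hψ.continuous.continuousAt hU)
  refine ⟨ψ '' V, hψ.isOpenMap.image_mem_nhds hV, image_subset_iff.2 hVU, ψ '' C₁, ψ '' C₂, ?_,
    (disjoint_image_iff hψ.injective).2 hdisj, hC₁.image ψ hψ.continuous.continuousOn,
    hC₂.image ψ hψ.continuous.continuousOn, ?_, ?_⟩
  · rw [← image_sdiff hψ.injective, hCV, image_union]
  · exact image_inter hψ.injective ▸ hγ₁.image ψ
  · exact image_inter hψ.injective ▸ hγ₂.image ψ

namespace GoodDrawing

variable {n : ℕ}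

/-- The image of a good drawing under an open embedding of the ambient space; openness is what
makes the images of crossing arcs cross. -/
def map (D : GoodDrawing n X) (ψ : X → Y) (hψ : IsOpenEmbedding ψ) : GoodDrawing n Y where
  vtx i := ψ (D.vtx i)
  arc u v := ψ '' D.arc u v
  vtx_inj := hψ.injective.comp D.vtx_inj
  arc_symm u v := by rw [D.arc_symm]
  isArc u v huv := by
    obtain ⟨f, hf, hinj, hf0, hf1, harc⟩ := D.isArc u v huv
    exact ⟨ψ ∘ f, hψ.continuous.comp_continuousOn hf, hψ.injective.comp_injOn hinj,
      congrArg ψ hf0, congrArg ψ hf1, by rw [harc, image_comp]⟩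
  vtx_not_mem u v w huv hwu hwv := by
    rw [hψ.injective.mem_set_image]
    exact D.vtx_not_mem u v w huv hwu hwv
  adj_arcs u v w huv huw hvw := by
    rw [← image_inter hψ.injective, D.adj_arcs u v w huv huw hvw, image_singleton]
  indep_arcs u v x y huv hxy hux huy hvx hvy := by
    obtain ⟨hsub, hcross⟩ := D.indep_arcs u v x y huv hxy hux huy hvx hvy
    rw [← image_inter hψ.injective]
    refine ⟨hsub.image ψ, ?_⟩
    rintro _ ⟨p, hp, rfl⟩
    exact ⟨(hcross p hp).1.image hψ, (hcross p hp).2.image hψ⟩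
  no_triple_pt p hp u v x y s t huv hxy hst huvxy huvst hxyst := by
    rintro ⟨⟨z, hzuv, rfl⟩, hzxy, hzst⟩
    rw [hψ.injective.mem_set_image] at hzxy hzst
    refine D.no_triple_pt z ?_ u v x y s t huv hxy hst huvxy huvst hxyst ⟨hzuv, hzxy, hzst⟩
    rintro ⟨i, rfl⟩
    exact hp ⟨i, rfl⟩

theorem arc_subset_image_univ (D : GoodDrawing n X) {u v : Fin n} (huv : u ≠ v) :
    D.arc u v ⊆ D.image univ := fun z hz => by
  simp only [GoodDrawing.image, mem_union, mem_iUnion]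
  exact .inr ⟨u, mem_univ u, v, mem_univ v, huv, hz⟩

theorem tri_subset_image_univ (D : GoodDrawing n X) {a b c : Fin n} (hab : a ≠ b) (hac : a ≠ c)
    (hbc : b ≠ c) : D.tri a b c ⊆ D.image univ :=
  union_subset (union_subset (D.arc_subset_image_univ hab) (D.arc_subset_image_univ hbc))
    (D.arc_subset_image_univ hac)

theorem map_tri (D : GoodDrawing n X) (hψ : IsOpenEmbedding ψ) (a b c : Fin n) :
    (D.map ψ hψ).tri a b c = ψ '' D.tri a b c := by
  simp only [tri, map, image_union]

theorem map_image_subset_range (D : GoodDrawing n X) (hψ : IsOpenEmbedding ψ) (W : Set (Fin n)) :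
    (D.map ψ hψ).image W ⊆ range ψ := by
  refine union_subset (image_subset_iff.2 fun i _ => mem_range_self (D.vtx i)) ?_
  simp only [iUnion_subset_iff]
  exact fun u _ v _ _ => image_subset_range ψ (D.arc u v)

theorem ConvexDisc.map {D : GoodDrawing n X} {Δ : Set X} (hΔ : D.ConvexDisc Δ)
    (hψ : IsOpenEmbedding ψ) : (D.map ψ hψ).ConvexDisc (ψ '' Δ) := fun x y hxy hx hy =>
  image_mono (hΔ x y hxy (hψ.injective.mem_set_image.1 hx) (hψ.injective.mem_set_image.1 hy))

end GoodDrawing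

end Transport

theorem GoodDrawing.faceConvex_map {n : ℕ} {X Y : Type*} [MetricSpace X] [TopologicalSpace Y]
    [CompactSpace Y] [T2Space Y] {D : GoodDrawing n X}
    (hD : ∀ a b c : Fin n, a ≠ b → a ≠ c → b ≠ c → ∀ Δ : Set X, IsClosedSide (D.tri a b c) Δ →
      Bornology.IsBounded Δ → D.ConvexDisc Δ)
    {ψ : X → Y} (hψ : IsOpenEmbedding ψ) {p : Y} (hrange : range ψ = {p}ᶜ) :
    (D.map ψ hψ).FaceConvex (connectedComponentIn ((D.map ψ hψ).image univ)ᶜ p) := by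
  have hp : p ∉ (D.map ψ hψ).image univ := fun h =>
    (hrange.subset (D.map_image_subset_range hψ univ h)) rfl
  refine ⟨⟨p, hp, rfl⟩, fun a b c hab hac hbc Δ hΔ hpΔ => ?_⟩
  have hpmem : p ∉ Δ := mt
    (hΔ.connectedComponentIn_subset_of_mem (tri_subset_image_univ _ hab hac hbc) hp) hpΔ
  have hΔrange : Δ ⊆ range ψ := hrange ▸ subset_compl_singleton_iff.2 hpmem
  have hΔcompact : IsCompact Δ :=
    (hΔ.isClosed (isCompact_tri _ hab hac hbc).isClosed).isCompact
  rw [D.map_tri] at hΔ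
  obtain ⟨Δ₀, hΔ₀, rfl⟩ := hΔ.exists_eq_image hψ.isEmbedding hΔrange
  exact (hD a b c hab hac hbc Δ₀ hΔ₀ (hψ.isInducing.isCompact_iff.2 hΔcompact).isBounded).map hψ

/-- In a pseudolinear good drawing of `K_n` in the plane, the bounded closed disc of
every 3-cycle is convex; consequently the spherical drawing obtained via the inverse of
any stereographic projection is face-convex, with outer face the face containing the
projection point. -/
theorem faceConvex_of_pseudolinear (n : ℕ) (D : GoodDrawing n Plane)
    (hD : D.Pseudolinear) :
    (∀ a b c : Fin n, a ≠ b → a ≠ c → b ≠ c →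
      ∀ Δ : Set Plane, IsClosedSide (D.tri a b c) Δ → Bornology.IsBounded Δ →
        D.ConvexDisc Δ) ∧
    ∀ (p : SpherePt) (φ : {x : SpherePt // x ≠ p} ≃ₜ Plane),
      ∃ D' : GoodDrawing n SpherePt,
        (∀ i : Fin n, D'.vtx i = ((φ.symm (D.vtx i) : {x : SpherePt // x ≠ p}) : SpherePt)) ∧
        (∀ u v : Fin n, u ≠ v →
          D'.arc u v = Subtype.val '' (⇑φ.symm '' D.arc u v)) ∧
        D'.FaceConvex (connectedComponentIn (D'.image Set.univ)ᶜ p) := by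
  obtain ⟨L, hL⟩ := hD.exists_pseudolineExtension
  have hconvex (a b c : Fin n) (hab : a ≠ b) (hac : a ≠ c) (hbc : b ≠ c) (Δ : Set Plane)
      (hΔ : IsClosedSide (D.tri a b c) Δ) (hb : Bornology.IsBounded Δ) : D.ConvexDisc Δ :=
    hL.convexDisc_of_isBounded hab hac hbc hΔ hb
  refine ⟨hconvex, fun p φ => ?_⟩
  have hψ : IsOpenEmbedding (Subtype.val ∘ φ.symm : Plane → SpherePt) :=
    isOpen_compl_singleton.isOpenEmbedding_subtypeVal.comp φ.symm.isOpenEmbedding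
  have hrange : range (Subtype.val ∘ φ.symm : Plane → SpherePt) = {p}ᶜ := by
    rw [φ.symm.surjective.range_comp, Subtype.range_coe_subtype]
    rfl
  exact ⟨D.map _ hψ, fun _ => rfl, fun _ _ _ => image_comp _ _ _,
    GoodDrawing.faceConvex_map hconvex hψ hrange⟩

end
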